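/- Let k be a field of characteristic zero, let f ∈ k[x_0,…,x_n] be a homogeneous polynomial, and let g ∈ k[y_0,…,y_n] satisfy g(f_0,…,f_n) = 0 in k[x_0,…,x_n], where f_i = ∂f/∂x_i. Define g_i := (∂g/∂y_i)(f_0,…,f_n) ∈ k[x_0,…,x_n]. Then for every j = 0,…,n and every λ ∈ k, the polynomial obtained from f_j by substituting x_i ↦ x_i + λ·g_i(x_0,…,x_n) equals f_j; that is, f_j(x + λ·(g_0(x),…,g_n(x))) = f_j(x) as polynomial identities. -/

import Mathlib

open MvPolynomial

/-!
Write `∇f = (f₀, …, fₙ)`, `v = (g₀, …, gₙ)` and let `D = ∑ vᵢ ∂/∂xᵢ` be the derivative along the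
vector field `v`. Differentiating `g(∇f) = 0` with respect to `xⱼ` gives `∑ᵢ gᵢ ∂fᵢ/∂xⱼ = 0`; since
`∂fᵢ/∂xⱼ = ∂fⱼ/∂xᵢ`, this says `D fⱼ = 0`. As `vᵢ` is a polynomial in the `fⱼ`, also `D vᵢ = 0`.
Hence, for every `p`, applying `D` to the coefficients of `p(x + t v(x))`, viewed as a polynomial
in `t`, agrees with `d/dt`, because this holds for the generators `xᵢ + t vᵢ(x)`. If `D p = 0`, the
constant coefficient is killed by `D`, so inductively all higher coefficients vanish.
-/

section Derivations

variable {R : Type*} [CommSemiring R] {σ : Type*}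

theorem derivation_eq_sum_pderiv_smul {M : Type*} [AddCommMonoid M] [Module R M]
    [Module (MvPolynomial σ R) M] [IsScalarTower R (MvPolynomial σ R) M]
    (D : Derivation R (MvPolynomial σ R) M) {p : MvPolynomial σ R} {s : Finset σ}
    (hs : p.vars ⊆ s) : D p = ∑ i ∈ s, pderiv i p • D (X i) := by
  classical
  let E : Derivation R (MvPolynomial σ R) M :=
    ∑ i ∈ s, (LinearMap.toSpanSingleton (MvPolynomial σ R) M (D (X i))).compDer (pderiv i)
  have hE (q : MvPolynomial σ R) : E q = ∑ i ∈ s, pderiv i q • D (X i) := by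
    change Derivation.coeFnAddMonoidHom E q = _
    simp [E, map_sum]
  rw [← hE]
  refine derivation_eq_of_forall_mem_vars fun i hi => ?_
  simp [hE, pderiv_X, Pi.single_apply, ite_smul, hs hi]

theorem derivation_aeval_eq_sum {S M : Type*} [CommSemiring S] [Algebra R S] [AddCommMonoid M]
    [Module R M] [Module S M] [IsScalarTower R S M] (D : Derivation R S M) (h : σ → S)
    {p : MvPolynomial σ R} {s : Finset σ} (hs : p.vars ⊆ s) :
    D (aeval h p) = ∑ i ∈ s, aeval h (pderiv i p) • D (h i) := by
  -- Through `aeval h`, both `S` and `M` become modules over the polynomial ring.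
  let φ : MvPolynomial σ R →ₐ[R] S := aeval h
  let : Algebra (MvPolynomial σ R) S := φ.toAlgebra
  let : Module (MvPolynomial σ R) M := Module.compHom M φ.toRingHom
  have : IsScalarTower (MvPolynomial σ R) S M := ⟨fun q a m => mul_smul (φ q) a m⟩
  have : IsScalarTower R (MvPolynomial σ R) S := .of_algHom φ
  have : IsScalarTower R (MvPolynomial σ R) M := .to₁₂₄ R (MvPolynomial σ R) S M
  have h_sum := derivation_eq_sum_pderiv_smul (D.compAlgebraMap (MvPolynomial σ R)) hs
  have h_X (i : σ) : D.compAlgebraMap (MvPolynomial σ R) (X i) = D (h i) :=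
    congrArg D (aeval_X h i)
  simp only [h_X] at h_sum
  exact h_sum

end Derivations

section CoeffwiseDerivation

variable {R A : Type*} [CommRing R] [CommRing A] [Algebra R A]

/-- The extension of a derivation `D` of `A` to `A[t]` with `D t = 0`, i.e. `D` applied to each
coefficient. This is `Derivation.mapCoeffs` with values in `A[t]` rather than in the isomorphic
`PolynomialModule A A`. -/
noncomputable def coeffwiseDerivation (D : Derivation R A A) :
    Derivation R (Polynomial A) (Polynomial A) :=
  PolynomialModule.equivPolynomialSelf.toLinearMap.compDer D.mapCoeffs

theorem coeff_coeffwiseDerivation (D : Derivation R A A) (P : Polynomial A) (m : ℕ) :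
    (coeffwiseDerivation D P).coeff m = D (P.coeff m) :=
  rfl

theorem coeffwiseDerivation_X (D : Derivation R A A) :
    coeffwiseDerivation D Polynomial.X = 0 := by
  simp [coeffwiseDerivation]

theorem coeffwiseDerivation_C (D : Derivation R A A) (a : A) :
    coeffwiseDerivation D (Polynomial.C a) = Polynomial.C (D a) := by
  simp [coeffwiseDerivation]

theorem eq_C_of_coeffwiseDerivation_eq_derivative [IsAddTorsionFree A] {D : Derivation R A A}
    {P : Polynomial A} (hP : coeffwiseDerivation D P = Polynomial.derivative P)
    (h_zero : D (P.coeff 0) = 0) : P = Polynomial.C (P.coeff 0) := by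
  have h_coeff (m : ℕ) : D (P.coeff m) = (m + 1) • P.coeff (m + 1) := by
    rw [← coeff_coeffwiseDerivation, hP, Polynomial.coeff_derivative, nsmul_eq_mul', Nat.cast_succ]
  have h_const (m : ℕ) : D (P.coeff m) = 0 := by
    induction m with
    | zero => exact h_zero
    | succ m ih =>
      have h_next : P.coeff (m + 1) = 0 :=
        (nsmul_eq_zero_iff_right m.succ_ne_zero).1 ((h_coeff m).symm.trans ih)
      rw [h_next, map_zero]
  refine Polynomial.eq_C_of_derivative_eq_zero (Polynomial.ext fun m => ?_)
  rw [← hP, coeff_coeffwiseDerivation, h_const, Polynomial.coeff_zero]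

end CoeffwiseDerivation

section AlongField

variable {R : Type*} [CommRing R] {σ : Type*}

/-- The substitution `p(x) ↦ p(x + t v(x))`, as a homomorphism into the polynomials in `t` over
`R[x]`: the restriction of `p` to the lines with directions given by the vector field `v`. -/
noncomputable def alongField (v : σ → MvPolynomial σ R) :
    MvPolynomial σ R →ₐ[R] Polynomial (MvPolynomial σ R) :=
  aeval fun i => Polynomial.C (X i) + Polynomial.C (v i) * Polynomial.X

theorem eval_alongField (v : σ → MvPolynomial σ R) (c p : MvPolynomial σ R) :
    (alongField v p).eval c = aeval (fun i => X i + c * v i) p := by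
  have h_comp : ((Polynomial.aeval c).restrictScalars R).comp (alongField v) =
      aeval fun i => X i + c * v i := by
    refine MvPolynomial.algHom_ext fun i => ?_
    simp [alongField, mul_comm c]
  simpa using DFunLike.congr_fun h_comp p

theorem coeff_zero_alongField (v : σ → MvPolynomial σ R) (p : MvPolynomial σ R) :
    (alongField v p).coeff 0 = p := by
  simp [Polynomial.coeff_zero_eq_eval_zero, eval_alongField]

theorem coeffwiseDerivation_alongField {v : σ → MvPolynomial σ R}
    (hv : ∀ i, mkDerivation R v (v i) = 0) (p : MvPolynomial σ R) :
    coeffwiseDerivation (mkDerivation R v) (alongField v p) =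
      Polynomial.derivative (alongField v p) := by
  let δ : Derivation R (Polynomial (MvPolynomial σ R)) (Polynomial (MvPolynomial σ R)) :=
    coeffwiseDerivation (mkDerivation R v) - Polynomial.derivative'.restrictScalars R
  have hδ (i : σ) : δ (Polynomial.C (X i) + Polynomial.C (v i) * Polynomial.X) = 0 := by
    simp [δ, coeffwiseDerivation_C, coeffwiseDerivation_X, hv]
  have h_chain : δ (alongField v p) = 0 := by
    rw [alongField, derivation_aeval_eq_sum δ _ subset_rfl]
    simp only [hδ, smul_zero, Finset.sum_const_zero]
  exact sub_eq_zero.1 h_chain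

instance isAddTorsionFree_mvPolynomial [IsAddTorsionFree R] :
    IsAddTorsionFree (MvPolynomial σ R) :=
  Function.Injective.isAddTorsionFree (AddMonoidHom.pi coeffAddMonoidHom) fun p q h =>
    MvPolynomial.ext p q (congrFun h)

theorem aeval_X_add_mul_eq_self [IsAddTorsionFree R] {v : σ → MvPolynomial σ R}
    (hv : ∀ i, mkDerivation R v (v i) = 0) {p : MvPolynomial σ R} (hp : mkDerivation R v p = 0)
    (c : MvPolynomial σ R) : aeval (fun i => X i + c * v i) p = p := by
  have h_const : alongField v p = Polynomial.C p := by
    simpa only [coeff_zero_alongField] using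
      eq_C_of_coeffwiseDerivation_eq_derivative (coeffwiseDerivation_alongField hv p)
        (by rwa [coeff_zero_alongField])
  rw [← eval_alongField, h_const, Polynomial.eval_C]

end AlongField

section RelationField

variable {R : Type*} [CommRing R] {σ : Type*} {f g : MvPolynomial σ R}

theorem pderiv_pderiv_comm (i j : σ) (p : MvPolynomial σ R) :
    pderiv i (pderiv j p) = pderiv j (pderiv i p) := by
  classical
  let D (l : σ) : Derivation R (MvPolynomial σ R) (MvPolynomial σ R) := pderiv l
  have h_bracket : ⁅D i, D j⁆ = 0 := by
    refine derivation_ext fun l => ?_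
    simp [D, Derivation.commutator_apply, pderiv_X, Pi.single_apply, apply_ite]
  exact sub_eq_zero.1 (DFunLike.congr_fun h_bracket p)

/-- The vector field `ψ_g = (g₀, …, gₙ)` with `gᵢ = (∂g/∂yᵢ)(∇f)`, attached to a polynomial `g`
which is meant to be a relation `g(∇f) = 0` between the partial derivatives of `f`. -/
noncomputable def relationField (f g : MvPolynomial σ R) (i : σ) : MvPolynomial σ R :=
  aeval (fun j => pderiv j f) (pderiv i g)

theorem mkDerivation_relationField_pderiv (hg : aeval (fun i => pderiv i f) g = 0) (j : σ) :
    mkDerivation R (relationField f g) (pderiv j f) = 0 := by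
  classical
  let s := (pderiv j f).vars ∪ g.vars
  calc mkDerivation R (relationField f g) (pderiv j f)
      = ∑ i ∈ s, pderiv i (pderiv j f) * relationField f g i := by
        simpa using derivation_eq_sum_pderiv_smul (mkDerivation R (relationField f g))
          (Finset.subset_union_left : (pderiv j f).vars ⊆ s)
    _ = ∑ i ∈ s, relationField f g i * pderiv j (pderiv i f) :=
        Finset.sum_congr rfl fun i _ => by rw [pderiv_pderiv_comm, mul_comm]
    _ = pderiv j (aeval (fun i => pderiv i f) g) :=
        (derivation_aeval_eq_sum (pderiv j) _ Finset.subset_union_right).symm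
    _ = 0 := by rw [hg, map_zero]

theorem mkDerivation_relationField_relationField (hg : aeval (fun i => pderiv i f) g = 0)
    (i : σ) : mkDerivation R (relationField f g) (relationField f g i) = 0 := by
  rw [relationField, derivation_aeval_eq_sum _ _ subset_rfl]
  simp only [mkDerivation_relationField_pderiv hg, smul_zero, Finset.sum_const_zero]

theorem stmt11_general [IsAddTorsionFree R] (hg : aeval (fun i => pderiv i f) g = 0)
    (j : σ) (c : MvPolynomial σ R) :
    aeval (fun i => X i + c * aeval (fun i' => pderiv i' f) (pderiv i g)) (pderiv j f) =
      pderiv j f :=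
  aeval_X_add_mul_eq_self (mkDerivation_relationField_relationField hg)
    (mkDerivation_relationField_pderiv hg j) c

end RelationField

/-- Identity (2.5) of the paper: if `f` is homogeneous, `g(f₀, …, fₙ) = 0` where
`fᵢ = ∂f/∂xᵢ`, and `gᵢ := (∂g/∂yᵢ)(f₀, …, fₙ)`, then for every `j` and every `λ ∈ k`
one has `fⱼ(x + λ·(g₀(x), …, gₙ(x))) = fⱼ(x)` as polynomial identities. -/
theorem stmt11 {k : Type*} [Field k] [CharZero k] (n d : ℕ)
    (f : MvPolynomial (Fin (n + 1)) k) (hhom : f.IsHomogeneous d)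
    (g : MvPolynomial (Fin (n + 1)) k)
    (hg : aeval (fun i => pderiv i f) g = 0) :
    ∀ (j : Fin (n + 1)) (lam : k),
      aeval (fun i => X i + C lam * (aeval (fun i' => pderiv i' f) (pderiv i g)))
        (pderiv j f) = pderiv j f :=
  fun j lam => stmt11_general hg j (C lam)
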